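/- arXiv:2111.06308 — 2 statements merged into one kernel-verified Lean document; each statement's English description precedes it below -/
import Mathlib

section
/- For every k there exists a directed layered graph on O(k³) vertices that is a local optimum of single-edge local search (no directed edge (u,v) with disc(v) > disc(u)+2) and has a vertex of discrepancy k. Hence local optima on general graphs can have discrepancy Ω(n^{1/3}) where n is the number of vertices. -/
open Finset

def inDeg {V : Type*} [DecidableEq V] (D : Finset (V × V)) (v : V) : ℕ :=
  (D.filter (fun e => e.2 = v)).card

def outDeg {V : Type*} [DecidableEq V] (D : Finset (V × V)) (v : V) : ℕ :=
  (D.filter (fun e => e.1 = v)).card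

def disc {V : Type*} [DecidableEq V] (D : Finset (V × V)) (v : V) : ℤ :=
  (inDeg D v : ℤ) - (outDeg D v : ℤ)

/-!
In the layered digraph with `n i` vertices in layer `i`, a vertex of layer `i` has discrepancy
`n (i + 1) - n (i - 1)`. The sequence `i * (K - i) / 2` solves `n (i + 1) - n (i - 1) = K - 2 * i`
and vanishes at `0` and `K`, so it needs no correction at the first and last layers; rounding it up
only adds `1 / 2` to the terms of one parity class and preserves the recurrence. Every edge then
raises the discrepancy by exactly `2`. For `K = k + 2`, the vertices of layer `1` have discrepancy
`k`, and rounding up (rather than down) keeps that layer nonempty for `k = 0`.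
-/

section LayeredDigraph

variable {V : Type*} [Fintype V]

/-- The layered digraph of a map `ℓ` assigning a layer to each vertex: every vertex of layer
`i + 1` has an edge to every vertex of layer `i`. -/
def layeredDigraph (ℓ : V → ℕ) : Finset (V × V) := {e | ℓ e.1 = ℓ e.2 + 1}

lemma mem_layeredDigraph {ℓ : V → ℕ} {e : V × V} :
    e ∈ layeredDigraph ℓ ↔ ℓ e.1 = ℓ e.2 + 1 := by
  simp only [layeredDigraph, mem_filter_univ]

variable [DecidableEq V]

lemma inDeg_layeredDigraph (ℓ : V → ℕ) (v : V) :
    inDeg (layeredDigraph ℓ) v = #{u | ℓ u = ℓ v + 1} := by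
  have edges_into : (layeredDigraph ℓ).filter (fun e => e.2 = v) =
      ({u | ℓ u = ℓ v + 1} : Finset V) ×ˢ {v} := by
    ext ⟨a, b⟩
    simp only [mem_filter, mem_layeredDigraph, mem_product, mem_univ, true_and, mem_singleton]
    grind
  rw [inDeg, edges_into, card_product, card_singleton, mul_one]

lemma outDeg_layeredDigraph (ℓ : V → ℕ) (v : V) :
    outDeg (layeredDigraph ℓ) v = #{u | ℓ u + 1 = ℓ v} := by
  have edges_out_of : (layeredDigraph ℓ).filter (fun e => e.1 = v) =
      {v} ×ˢ ({u | ℓ u + 1 = ℓ v} : Finset V) := by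
    ext ⟨a, b⟩
    simp only [mem_filter, mem_layeredDigraph, mem_product, mem_univ, true_and, mem_singleton]
    grind
  rw [outDeg, edges_out_of, card_product, card_singleton, one_mul]

lemma disc_layeredDigraph {ℓ : V → ℕ} {n : ℕ → ℕ} (hn : ∀ i, #{u | ℓ u = i} = n i) {v : V} {i : ℕ}
    (hv : ℓ v = i + 1) : disc (layeredDigraph ℓ) v = n (i + 2) - n i := by
  simp only [disc, inDeg_layeredDigraph, outDeg_layeredDigraph, hv, Nat.add_right_cancel_iff, hn]

end LayeredDigraph

lemma exists_card_fiber_eq {α ι : Type*} [Fintype α] [DecidableEq ι] {s : Finset ι} {n : ι → ℕ}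
    (hα : Fintype.card α = ∑ i ∈ s, n i) (hn : ∀ i ∉ s, n i = 0) :
    ∃ f : α → ι, ∀ i, #{x | f x = i} = n i := by
  have card_sigma_fin : Fintype.card (Σ i : s, Fin (n i)) = ∑ i ∈ s, n i := by
    rw [Fintype.card_sigma, ← sum_coe_sort s]
    simp only [Fintype.card_fin]
  let e : α ≃ Σ i : s, Fin (n i) := Fintype.equivOfCardEq (hα.trans card_sigma_fin.symm)
  refine ⟨fun x => (e x).1, fun i => ?_⟩
  by_cases hi : i ∈ s
  · lift i to s using hi
    calc #{x | ((e x).1 : ι) = i}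
      _ = Fintype.card {x // (e x).1 = i} := by
        rw [Fintype.card_subtype]
        simp only [Subtype.coe_inj]
      _ = Fintype.card {p : Σ j : s, Fin (n j) // p.1 = i} :=
        Fintype.card_congr (e.subtypeEquiv fun _ => Iff.rfl)
      _ = n i := by rw [Fintype.card_congr (Equiv.sigmaSubtype i), Fintype.card_fin]
  · rw [hn i hi, card_eq_zero, filter_eq_empty_iff]
    rintro x - rfl
    exact hi (e x).1.2

/-- The number of vertices in layer `i`, namely `i * (K - i) / 2` rounded up. Layers `0` and `K`
are empty, and truncated subtraction makes all layers beyond `K` empty too. -/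
def layerSize (K i : ℕ) : ℕ := (i * (K - i) + 1) / 2

lemma layerSize_eq_zero_of_le {K i : ℕ} (h : K ≤ i) : layerSize K i = 0 := by
  simp only [layerSize, Nat.sub_eq_zero_of_le h, mul_zero, zero_add, Nat.reduceDiv]

lemma layerSize_add_two_sub {K i : ℕ} (h : i + 2 ≤ K) :
    (layerSize K (i + 2) : ℤ) - layerSize K i = K - 2 * (i + 1) := by
  obtain ⟨d, rfl⟩ := Nat.exists_eq_add_of_le h
  have product_step : (i + 2) * d + 2 * (i + 1) = i * (d + 2) + 2 * (d + 1) := by ring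
  have sub_left : i + 2 + d - (i + 2) = d := by omega
  have sub_right : i + 2 + d - i = d + 2 := by omega
  simp only [layerSize, sub_left, sub_right]
  omega

lemma layerSize_le_sq (K i : ℕ) : layerSize K i ≤ K ^ 2 := by
  obtain hi | hi := le_total K i
  · simp only [layerSize_eq_zero_of_le hi, zero_le]
  · have mul_le_sq : i * (K - i) ≤ K ^ 2 := by
      rw [sq]
      exact Nat.mul_le_mul hi (Nat.sub_le K i)
    rw [layerSize]
    omega

lemma sum_layerSize_le_cube (K : ℕ) : ∑ i ∈ range K, layerSize K i ≤ K ^ 3 :=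
  calc ∑ i ∈ range K, layerSize K i
    _ ≤ #(range K) • K ^ 2 := sum_le_card_nsmul _ _ _ fun i _ => layerSize_le_sq K i
    _ = K ^ 3 := by rw [card_range, smul_eq_mul, ← pow_succ']

lemma disc_layeredDigraph_layerSize {V : Type*} [Fintype V] [DecidableEq V] {K : ℕ} {ℓ : V → ℕ}
    (hℓ : ∀ i, #{u | ℓ u = i} = layerSize K i) (v : V) :
    disc (layeredDigraph ℓ) v = K - 2 * ℓ v := by
  have layer_nonempty : 0 < layerSize K (ℓ v) := by
    rw [← hℓ, card_pos]
    exact ⟨v, mem_filter_univ v |>.mpr rfl⟩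
  obtain ⟨i, hi⟩ : ∃ i, ℓ v = i + 1 := by
    refine Nat.exists_eq_succ_of_ne_zero fun h => ?_
    simp only [layerSize, h, zero_mul, zero_add, Nat.reduceDiv, lt_irrefl] at layer_nonempty
  have layer_lt : ℓ v < K := by
    by_contra! h
    exact layer_nonempty.ne' (layerSize_eq_zero_of_le h)
  rw [disc_layeredDigraph hℓ hi, layerSize_add_two_sub (by omega), hi]
  push_cast
  rfl

lemma exists_layering_card_eq_layerSize (K : ℕ) :
    ∃ ℓ : Fin (∑ i ∈ range K, layerSize K i) → ℕ, ∀ i, #{v | ℓ v = i} = layerSize K i :=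
  exists_card_fiber_eq (Fintype.card_fin _) fun _ hi =>
    layerSize_eq_zero_of_le (not_lt.mp (mem_range.not.mp hi))

/-- **`Ω(n^{1/3})` lower bound for single-edge local search.** For every `k` there is a
directed graph on `O(k³)` vertices that is a local optimum of edge-flip local search
(no directed edge `(u,v)` with `disc v > disc u + 2`) and has a vertex of
discrepancy `k`. -/
theorem stmt14 :
    ∃ C : ℕ, 0 < C ∧
      ∀ k : ℕ,
        ∃ (N : ℕ) (D : Finset (Fin N × Fin N)),
          (∀ e ∈ D, disc D e.2 ≤ disc D e.1 + 2) ∧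
          (∃ v : Fin N, disc D v = (k : ℤ)) ∧
          N ≤ C * (k ^ 3 + 1) := by
  refine ⟨32, by norm_num, fun k => ?_⟩
  obtain ⟨ℓ, hℓ⟩ := exists_layering_card_eq_layerSize (k + 2)
  refine ⟨_, layeredDigraph ℓ, fun e he => ?_, ?_, ?_⟩
  · rw [disc_layeredDigraph_layerSize hℓ, disc_layeredDigraph_layerSize hℓ,
      mem_layeredDigraph.mp he]
    push_cast
    linarith
  · have layer_one_nonempty : 0 < #{v | ℓ v = 1} := by
      rw [hℓ, layerSize]
      omega
    obtain ⟨v, hv⟩ := card_pos.mp layer_one_nonempty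
    refine ⟨v, ?_⟩
    rw [disc_layeredDigraph_layerSize hℓ, (mem_filter_univ v).mp hv]
    push_cast
    ring
  · calc ∑ i ∈ range (k + 2), layerSize (k + 2) i
      _ ≤ (k + 2) ^ 3 := sum_layerSize_le_cube (k + 2)
      _ ≤ 2 ^ (3 - 1) * (k ^ 3 + 2 ^ 3) := add_pow_le k.zero_le (Nat.zero_le 2) 3
      _ ≤ 32 * (k ^ 3 + 1) := by omega
end

section
/- In the fully dynamic vector balancing problem with vectors in [−1,1]^n, there is an algorithm that after every insertion or deletion maintains a signing of discrepancy O(√n) with amortized recourse O(n·log T) per update, against an adaptive adversary, where T is the number of updates. In particular, the distributed Bárány–Grinberg tree maintains at each tree node v an assignment y^v ∈ [−1,1]^{P_v} with ∑_{i∈P_v} y^v_i a_i = 0 and at most n fractional coordinates, and a single vector update changes the maintained assignment in at most O(n·log T) coordinates. -/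
/-! A Bárány–Grinberg rounding moves an assignment in `[-1, 1]` to a vertex of the polytope of the
assignments with the same weighted sum, which leaves at most `n` fractional coordinates, and it
only moves coordinates that were fractional. In a binary tree over the time slots, whose nodes
round the concatenation of the roundings of their children, replacing one vector affects only the
nodes on a root-to-leaf path, and at each of them at most `4 n` coordinates move beyond those moved
below: the fractional ones of the children before and after the update.

The at most `n` fractional coordinates at the root are rounded to signs at cost `O(√n)`. By
Spencer's theorem every subfamily of these vectors has a signing of norm `O(√n)`, and balancing the
binary digits of the fractional values one after the other extends this from the value `0` to
arbitrary values in `[-1, 1]`. Spencer's theorem follows from the entropy method: the rounded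
signed sums of a random signing have small entropy, so that exponentially many signings agree in
all of them, and half the difference of two such signings that lie far apart in Hamming distance is
a partial coloring. -/

open Finset

/-- An update: either insert a new vector, or delete the vector inserted at a given
(earlier) time step. -/
abbrev Update (n : ℕ) := (Fin n → ℝ) ⊕ ℕ

/-- The set of time indices of the currently active (inserted and not yet deleted)
vectors after the first `t` updates. -/
def active {n : ℕ} (u : ℕ → Update n) : ℕ → Finset ℕ
  | 0 => ∅
  | t + 1 =>
    match u t with
    | Sum.inl _ => insert t (active u t)
    | Sum.inr s => (active u t).erase s

/-- The vector inserted at time `s` (junk if `u s` is a deletion). -/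
def vecAt {n : ℕ} (u : ℕ → Update n) (s : ℕ) : Fin n → ℝ :=
  match u s with
  | Sum.inl v => v
  | Sum.inr _ => 0

/-- The signing produced by the (deterministic, online) algorithm `Alg` at time `t`:
it may depend only on the history of the first `t` updates. -/
def sigOf {n : ℕ} (Alg : List (Update n) → ℕ → ℤ) (u : ℕ → Update n) (t : ℕ) :
    ℕ → ℤ :=
  Alg ((List.range t).map u)

namespace VectorBalancing

variable {α ι : Type*}

section RandomSigns

variable [DecidableEq α] {F A B : Finset α} {x : α}

/-- The signed sum of `a` over `F` in which the elements of `A` get the sign `+1` and those of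
`F \ A` the sign `-1`. A uniformly random signing of `F` is a uniformly random `A ∈ F.powerset`,
so that moments are sums over the powerset. -/
def signedSum (F : Finset α) (a : α → ℝ) (A : Finset α) : ℝ :=
  ∑ s ∈ A, a s - ∑ s ∈ F \ A, a s

lemma signedSum_insert_left (a : α → ℝ) (hx : x ∉ F) (hA : A ⊆ F) :
    signedSum (insert x F) a A = signedSum F a A - a x := by
  have hxA : x ∉ A := fun h => hx (hA h)
  rw [signedSum, signedSum, insert_sdiff_of_notMem _ hxA, sum_insert (by simp [hx])]
  ring

lemma signedSum_insert_insert (a : α → ℝ) (hx : x ∉ F) (hA : A ⊆ F) :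
    signedSum (insert x F) a (insert x A) = signedSum F a A + a x := by
  have hxA : x ∉ A := fun h => hx (hA h)
  rw [signedSum, signedSum, insert_sdiff_insert, sdiff_insert_of_notMem hx, sum_insert hxA]
  ring

lemma signedSum_sub_signedSum (a : α → ℝ) (hA : A ⊆ F) (hB : B ⊆ F) :
    signedSum F a A - signedSum F a B = 2 * (∑ s ∈ A, a s - ∑ s ∈ B, a s) := by
  rw [signedSum, signedSum]
  linarith [sum_sdiff (f := a) hA, sum_sdiff (f := a) hB]

lemma sum_powerset_insert_signedSum (a : α → ℝ) (g : ℝ → ℝ) (hx : x ∉ F) :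
    ∑ A ∈ (insert x F).powerset, g (signedSum (insert x F) a A)
      = ∑ A ∈ F.powerset, (g (signedSum F a A - a x) + g (signedSum F a A + a x)) := by
  rw [sum_powerset_insert hx, ← sum_add_distrib]
  refine sum_congr rfl fun A hA => ?_
  rw [signedSum_insert_left a hx (mem_powerset.1 hA),
    signedSum_insert_insert a hx (mem_powerset.1 hA)]

lemma sum_signedSum_sq (F : Finset α) (a : α → ℝ) :
    ∑ A ∈ F.powerset, signedSum F a A ^ 2 = 2 ^ #F * ∑ s ∈ F, a s ^ 2 := by
  induction F using Finset.induction_on with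
  | empty => simp [signedSum]
  | insert x F hx ih =>
    calc ∑ A ∈ (insert x F).powerset, signedSum (insert x F) a A ^ 2
        = ∑ A ∈ F.powerset, (2 * signedSum F a A ^ 2 + 2 * a x ^ 2) := by
          rw [sum_powerset_insert_signedSum a (· ^ 2) hx]
          exact sum_congr rfl fun A _ => by ring
      _ = 2 * (2 ^ #F * ∑ s ∈ F, a s ^ 2) + 2 ^ #F * (2 * a x ^ 2) := by
          rw [sum_add_distrib, ← mul_sum, ih, sum_const, card_powerset]
          simp
      _ = 2 ^ #(insert x F) * ∑ s ∈ insert x F, a s ^ 2 := by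
          rw [card_insert_of_notMem hx, sum_insert hx]
          ring

lemma sum_signedSum_pow_four_le (F : Finset α) (a : α → ℝ) :
    ∑ A ∈ F.powerset, signedSum F a A ^ 4 ≤ 2 ^ #F * (3 * (∑ s ∈ F, a s ^ 2) ^ 2) := by
  induction F using Finset.induction_on with
  | empty => simp [signedSum]
  | insert x F hx ih =>
    set v := ∑ s ∈ F, a s ^ 2
    calc ∑ A ∈ (insert x F).powerset, signedSum (insert x F) a A ^ 4
        = ∑ A ∈ F.powerset,
            (2 * signedSum F a A ^ 4 + 12 * a x ^ 2 * signedSum F a A ^ 2 + 2 * a x ^ 4) := by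
          rw [sum_powerset_insert_signedSum a (· ^ 4) hx]
          exact sum_congr rfl fun A _ => by ring
      _ = 2 * ∑ A ∈ F.powerset, signedSum F a A ^ 4 + 12 * a x ^ 2 * (2 ^ #F * v)
            + 2 ^ #F * (2 * a x ^ 4) := by
          rw [sum_add_distrib, sum_add_distrib, ← mul_sum, ← mul_sum, sum_signedSum_sq, sum_const,
            card_powerset]
          simp [v]
      _ ≤ 2 * (2 ^ #F * (3 * v ^ 2)) + 12 * a x ^ 2 * (2 ^ #F * v) + 2 ^ #F * (6 * a x ^ 4) := by
          gcongr
          norm_num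
      _ = 2 ^ #(insert x F) * (3 * (∑ s ∈ insert x F, a s ^ 2) ^ 2) := by
          rw [card_insert_of_notMem hx, sum_insert hx]
          ring

end RandomSigns

section Entropy

lemma sum_prod_le_one [Fintype ι] {γ : Type*} {p : γ → ℝ} (hp₀ : ∀ b, 0 ≤ p b)
    (hp₁ : ∀ B : Finset γ, ∑ b ∈ B, p b ≤ 1) (S : Finset (ι → γ)) :
    ∑ f ∈ S, ∏ i, p (f i) ≤ 1 := by
  classical
  set B : Finset γ := S.biUnion fun f => univ.image f
  have hSB : S ⊆ Fintype.piFinset fun _ => B := fun f hf =>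
    Fintype.mem_piFinset.2 fun i => mem_biUnion.2 ⟨f, hf, mem_image_of_mem f (mem_univ i)⟩
  calc ∑ f ∈ S, ∏ i, p (f i)
      ≤ ∑ f ∈ Fintype.piFinset fun _ : ι => B, ∏ i, p (f i) :=
        sum_le_sum_of_subset_of_nonneg hSB fun f _ _ => prod_nonneg fun i _ => hp₀ (f i)
    _ = ∏ _i : ι, ∑ b ∈ B, p b := (prod_univ_sum _ _).symm
    _ ≤ 1 := prod_le_one (fun _ _ => sum_nonneg fun b _ => hp₀ b) fun _ _ => hp₁ B

-- Read `g` as the lengths of a code for the values of `β`: their average bounds the entropy of `β`.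
lemma exists_exp_neg_le_card_fiber {Ω Γ : Type*} [DecidableEq Γ] {P : Finset Ω}
    (hP : P.Nonempty) (β : Ω → Γ) (g : Γ → ℝ) {m : ℝ}
    (hkraft : ∑ f ∈ P.image β, Real.exp (-g f) ≤ 1) (hm : ∑ A ∈ P, g (β A) ≤ #P * m) :
    ∃ f, #P * Real.exp (-m) ≤ #{A ∈ P | β A = f} := by
  have tangent (y : ℝ) : Real.exp (-m) * (1 + (m - y)) ≤ Real.exp (-y) := by
    calc Real.exp (-m) * (1 + (m - y)) ≤ Real.exp (-m) * Real.exp (m - y) := by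
          gcongr
          linarith [Real.add_one_le_exp (m - y)]
      _ = Real.exp (-y) := by rw [← Real.exp_add]; ring_nf
  have jensen : #P * Real.exp (-m) ≤ ∑ A ∈ P, Real.exp (-g (β A)) := by
    calc #P * Real.exp (-m)
        ≤ Real.exp (-m) * (#P + (#P * m - ∑ A ∈ P, g (β A))) := by
          rw [mul_comm]
          gcongr
          linarith
      _ = ∑ A ∈ P, Real.exp (-m) * (1 + (m - g (β A))) := by
          simp [← mul_sum, sum_add_distrib, sum_sub_distrib]
      _ ≤ ∑ A ∈ P, Real.exp (-g (β A)) := sum_le_sum fun A _ => tangent _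
  have weighted : ∑ f ∈ P.image β, (#P * Real.exp (-m)) * Real.exp (-g f)
      ≤ ∑ f ∈ P.image β, #{A ∈ P | β A = f} * Real.exp (-g f) := by
    calc ∑ f ∈ P.image β, (#P * Real.exp (-m)) * Real.exp (-g f)
        ≤ #P * Real.exp (-m) := by
          rw [← mul_sum]
          exact mul_le_of_le_one_right (by positivity) hkraft
      _ ≤ ∑ A ∈ P, Real.exp (-g (β A)) := jensen
      _ = ∑ f ∈ P.image β, #{A ∈ P | β A = f} * Real.exp (-g f) := by
          rw [sum_comp (fun f => Real.exp (-g f)) β]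
          simp only [nsmul_eq_mul]
  obtain ⟨f, -, hf⟩ := exists_le_of_sum_le (hP.image β) weighted
  exact ⟨f, le_of_mul_le_mul_right hf (Real.exp_pos _)⟩

/-- The code length given to the integer `b` in the entropy argument. The parameter `M` makes the
value `0` cheap, at the price of making all other values expensive. -/
noncomputable def codeLength (M : ℝ) (b : ℤ) : ℝ :=
  if b = 0 then 16 / M ^ 2 else M * (b : ℝ) ^ 4

lemma codeLength_le {M : ℝ} (hM : 0 ≤ M) (b : ℤ) :
    codeLength M b ≤ 16 / M ^ 2 + M * (b : ℝ) ^ 4 := by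
  unfold codeLength
  split_ifs
  · exact le_add_of_nonneg_right (by positivity)
  · exact le_add_of_nonneg_left (by positivity)

lemma codeLength_neg (M : ℝ) (b : ℤ) : codeLength M (-b) = codeLength M b := by
  simp [codeLength, Even.neg_pow (by decide : Even 4)]

lemma exp_neg_codeLength_zero_le {M : ℝ} (hM : 4 ≤ M) :
    Real.exp (-codeLength M 0) ≤ 1 - 8 / M ^ 2 := by
  set δ := 8 / M ^ 2 with hδ
  have hδ₀ : 0 < δ := by positivity
  have hδ₁ : δ ≤ 1 / 2 := by
    rw [hδ, div_le_iff₀ (by positivity)]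
    nlinarith
  have hcode : codeLength M 0 = 2 * δ := by
    rw [codeLength, if_pos rfl, hδ]
    ring
  rw [hcode, Real.exp_neg, inv_le_comm₀ (Real.exp_pos _) (by linarith)]
  calc (1 - δ)⁻¹ ≤ 2 * δ + 1 := by
        rw [inv_le_iff_one_le_mul₀ (by linarith)]
        nlinarith
    _ ≤ Real.exp (2 * δ) := Real.add_one_le_exp _

lemma exp_neg_codeLength_succ_le {M : ℝ} (hM : 4 ≤ M) (i : ℕ) :
    Real.exp (-codeLength M ((i + 1 : ℕ) : ℤ)) ≤ 2 / M ^ 2 * (1 / 2) ^ i := by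
  have hcode : codeLength M ((i + 1 : ℕ) : ℤ) = M * ((i + 1 : ℕ) : ℝ) ^ 4 := by
    rw [codeLength, if_neg (by omega), Int.cast_natCast]
  have hle : ((i + 1 : ℕ) : ℝ) ≤ ((i + 1 : ℕ) : ℝ) ^ 4 := by
    exact_mod_cast Nat.le_self_pow (by norm_num) (i + 1)
  have hexp : Real.exp (-M) ≤ 2 / M ^ 2 := by
    have hquad := Real.quadratic_le_exp_of_nonneg (show 0 ≤ M by linarith)
    rw [Real.exp_neg, ← inv_div]
    exact inv_anti₀ (by positivity) (by linarith)
  have hhalf : 2 / M ^ 2 ≤ 1 / 2 := by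
    rw [div_le_iff₀ (by positivity)]
    nlinarith
  calc Real.exp (-codeLength M ((i + 1 : ℕ) : ℤ))
      ≤ Real.exp (((i + 1 : ℕ) : ℝ) * -M) := by
        rw [hcode, Real.exp_le_exp]
        nlinarith
    _ = Real.exp (-M) * Real.exp (-M) ^ i := by rw [Real.exp_nat_mul, pow_succ']
    _ ≤ 2 / M ^ 2 * (1 / 2) ^ i := by
        gcongr
        exact hexp.trans hhalf

lemma sum_exp_neg_codeLength_le_one {M : ℝ} (hM : 4 ≤ M) (B : Finset ℤ) :
    ∑ b ∈ B, Real.exp (-codeLength M b) ≤ 1 := by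
  set N := B.sup Int.natAbs
  have hB : B ⊆ Icc (-(N : ℤ)) N := fun b hb => by
    have : b.natAbs ≤ N := le_sup (f := Int.natAbs) hb
    rw [mem_Icc]
    omega
  have heven : (fun b : ℤ => Real.exp (-codeLength M b)).Even := fun b => by
    simp only [codeLength_neg]
  calc ∑ b ∈ B, Real.exp (-codeLength M b)
      ≤ ∑ b ∈ Icc (-(N : ℤ)) N, Real.exp (-codeLength M b) :=
        sum_le_sum_of_subset_of_nonneg hB fun _ _ _ => (Real.exp_pos _).le
    _ = Real.exp (-codeLength M 0)
          + 2 * ∑ i ∈ range N, Real.exp (-codeLength M ((i + 1 : ℕ) : ℤ)) := by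
        rw [sum_Icc_of_even_eq_range heven, sum_range_succ']
        simp only [nsmul_eq_mul, Nat.cast_zero, Nat.cast_ofNat]
        ring
    _ ≤ (1 - 8 / M ^ 2) + 2 * ∑ i ∈ range N, 2 / M ^ 2 * (1 / 2) ^ i := by
        gcongr with i
        · exact exp_neg_codeLength_zero_le hM
        · exact exp_neg_codeLength_succ_le hM i
    _ ≤ (1 - 8 / M ^ 2) + 2 * (2 / M ^ 2 * 2) := by
        rw [← mul_sum]
        gcongr
        exact sum_geometric_two_le N
    _ = 1 := by ring

end Entropy

section HammingBall

variable [DecidableEq α] {F A : Finset α} {Q : Finset (Finset α)}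

lemma sum_pow_card_symmDiff_le (hA : A ⊆ F) (hQ : Q ⊆ F.powerset) {r : ℝ} (hr : 0 ≤ r) :
    ∑ B ∈ Q, r ^ #(symmDiff A B) ≤ (1 + r) ^ #F := by
  have hmaps : Q.image (symmDiff A) ⊆ F.powerset := by
    intro D hD
    obtain ⟨B, hB, rfl⟩ := mem_image.1 hD
    exact mem_powerset.2 (symmDiff_le_sup.trans (union_subset hA (mem_powerset.1 (hQ hB))))
  calc ∑ B ∈ Q, r ^ #(symmDiff A B) = ∑ D ∈ Q.image (symmDiff A), r ^ #D :=
        by rw [sum_image (symmDiff_right_injective A).injOn]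
    _ ≤ ∑ D ∈ F.powerset, r ^ #D :=
        sum_le_sum_of_subset_of_nonneg hmaps fun _ _ _ => pow_nonneg hr _
    _ = (1 + r) ^ #F := by
        rw [add_comm, ← sum_pow_mul_eq_add_pow]
        simp only [one_pow, mul_one]

-- Exponential Markov: each `B` in the ball contributes at least `(8 / 9) ^ #F` to the sum of
-- `(1 / 4) ^ #(symmDiff A B)`, because `(9 / 8) ^ 16 ≥ 4`.
lemma card_le_of_forall_symmDiff (hA : A ⊆ F) (hQ : Q ⊆ F.powerset)
    (hball : ∀ B ∈ Q, 16 * #(symmDiff A B) ≤ #F) : (#Q : ℝ) ≤ (45 / 32) ^ #F := by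
  have hone : ∀ B ∈ Q, (1 : ℝ) ≤ (9 / 8) ^ #F * (1 / 4) ^ #(symmDiff A B) := fun B hB => by
    calc (1 : ℝ) ≤ ((9 / 8) ^ 16 * (1 / 4)) ^ #(symmDiff A B) := one_le_pow₀ (by norm_num)
      _ = (9 / 8) ^ (16 * #(symmDiff A B)) * (1 / 4) ^ #(symmDiff A B) := by
          rw [mul_pow, ← pow_mul]
      _ ≤ (9 / 8) ^ #F * (1 / 4) ^ #(symmDiff A B) := by
          gcongr
          · norm_num
          · exact hball B hB
  calc (#Q : ℝ) = ∑ _B ∈ Q, (1 : ℝ) := by simp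
    _ ≤ ∑ B ∈ Q, (9 / 8 : ℝ) ^ #F * (1 / 4) ^ #(symmDiff A B) := sum_le_sum hone
    _ ≤ (9 / 8) ^ #F * (1 + 1 / 4) ^ #F := by
        rw [← mul_sum]
        gcongr
        exact sum_pow_card_symmDiff_le hA hQ (by norm_num)
    _ = (45 / 32) ^ #F := by
        rw [← mul_pow]
        norm_num

lemma exists_card_lt_mul_card_symmDiff (hF : F.Nonempty) (hQ : Q ⊆ F.powerset)
    (hcard : (2 : ℝ) ^ #F * Real.exp (-(#F / 4)) ≤ #Q) :
    ∃ A ∈ Q, ∃ B ∈ Q, #F < 16 * #(symmDiff A B) := by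
  have hexp : (3 / 4 : ℝ) ≤ Real.exp (-(1 / 4)) := by
    linarith [Real.add_one_le_exp (-(1 / 4 : ℝ))]
  have hlarge : (3 / 2 : ℝ) ^ #F ≤ #Q := by
    calc (3 / 2 : ℝ) ^ #F = 2 ^ #F * (3 / 4) ^ #F := by rw [← mul_pow]; norm_num
      _ ≤ 2 ^ #F * Real.exp (-(1 / 4)) ^ #F := by gcongr
      _ = 2 ^ #F * Real.exp (-(#F / 4)) := by rw [← Real.exp_nat_mul]; ring_nf
      _ ≤ #Q := hcard
  obtain ⟨A, hA⟩ : Q.Nonempty := by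
    rw [← card_pos, ← Nat.cast_pos (α := ℝ)]
    exact hlarge.trans_lt' (by positivity)
  by_contra! hball
  have hsmall := card_le_of_forall_symmDiff (mem_powerset.1 (hQ hA)) hQ (hball A hA)
  have hlt : (45 / 32 : ℝ) ^ #F < (3 / 2) ^ #F :=
    pow_lt_pow_left₀ (by norm_num) (by norm_num) hF.card_pos.ne'
  linarith

end HammingBall

section Spencer

/-- The discrepancy scale of Spencer's partial coloring of `k` vectors in dimension `n`, namely
`√n * (k / n) ^ (1 / 8)`. It is `√n` for `k = n` and decays geometrically along the iteration. -/
noncomputable def spencerScale (n k : ℕ) : ℝ := ((n : ℝ) ^ 3 * k) ^ (1 / 8 : ℝ)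

lemma spencerScale_nonneg (n k : ℕ) : 0 ≤ spencerScale n k := by
  unfold spencerScale
  positivity

lemma spencerScale_pos {n k : ℕ} (hn : 0 < n) (hk : 0 < k) : 0 < spencerScale n k := by
  unfold spencerScale
  positivity

lemma spencerScale_pow_eight (n k : ℕ) : spencerScale n k ^ 8 = (n : ℝ) ^ 3 * k := by
  rw [spencerScale, ← Real.rpow_natCast, ← Real.rpow_mul (by positivity)]
  norm_num

lemma spencerScale_le_sqrt {n k : ℕ} (hkn : k ≤ n) : spencerScale n k ≤ √n := by
  refine le_of_pow_le_pow_left₀ (n := 8) (by norm_num) (Real.sqrt_nonneg _) ?_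
  calc spencerScale n k ^ 8 = (n : ℝ) ^ 3 * k := spencerScale_pow_eight n k
    _ ≤ (n : ℝ) ^ 3 * n := by gcongr
    _ = (√n ^ 2) ^ 4 := by rw [Real.sq_sqrt n.cast_nonneg]; ring
    _ = √n ^ 8 := by ring

lemma spencerScale_le_of_mul_le {n k l : ℕ} (hl : 16 * l ≤ 15 * k) :
    spencerScale n l ≤ 127 / 128 * spencerScale n k := by
  refine le_of_pow_le_pow_left₀ (n := 8) (by norm_num)
    (mul_nonneg (by norm_num) (spencerScale_nonneg n k)) ?_
  have hl' : (16 : ℝ) * l ≤ 15 * k := by exact_mod_cast hl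
  have hshrink : (l : ℝ) ≤ (127 / 128) ^ 8 * k := by
    have : (0 : ℝ) ≤ k := k.cast_nonneg
    norm_num
    linarith
  calc spencerScale n l ^ 8 = (n : ℝ) ^ 3 * l := spencerScale_pow_eight n l
    _ ≤ (n : ℝ) ^ 3 * ((127 / 128) ^ 8 * k) := by gcongr
    _ = (127 / 128 * spencerScale n k) ^ 8 := by rw [mul_pow, spencerScale_pow_eight]; ring

lemma round_pow_four_le (z : ℝ) : (round z : ℝ) ^ 4 ≤ 16 * z ^ 4 := by
  have habs : |(round z : ℝ)| ≤ 2 * |z| := by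
    by_cases hz : round z = 0
    · simp [hz]
    · have hone : (1 : ℝ) ≤ |(round z : ℝ)| := by exact_mod_cast Int.one_le_abs hz
      have htri := abs_sub_abs_le_abs_sub (round z : ℝ) z
      rw [abs_sub_comm] at htri
      linarith [abs_sub_round z]
  calc (round z : ℝ) ^ 4 = |(round z : ℝ)| ^ 4 := (Even.pow_abs (by decide) _).symm
    _ ≤ (2 * |z|) ^ 4 := by gcongr
    _ = 16 * z ^ 4 := by rw [mul_pow, Even.pow_abs (by decide)]; norm_num

lemma sum_sq_le_card {F : Finset α} {a : α → ℝ} (ha : ∀ s ∈ F, |a s| ≤ 1) :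
    ∑ s ∈ F, a s ^ 2 ≤ #F := by
  simpa using sum_le_card_nsmul F (fun s => a s ^ 2) 1 fun s hs =>
    (sq_le_one_iff_abs_le_one _).2 (ha s hs)

lemma abs_sub_le_of_round_div_eq {x y w : ℝ} (hw : 0 < w) (h : round (x / w) = round (y / w)) :
    |x - y| ≤ w := by
  have hx := abs_sub_round (x / w)
  have hy := abs_sub_round (y / w)
  rw [← h, abs_sub_comm] at hy
  have hdiv : |x / w - y / w| ≤ 1 := by
    calc |x / w - y / w| ≤ |x / w - round (x / w)| + |round (x / w) - y / w| := abs_sub_le _ _ _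
      _ ≤ 1 := by linarith
  rwa [← sub_div, abs_div, abs_of_pos hw, div_le_one hw] at hdiv

variable {F : Finset α}

lemma sum_codeLength_round_le [DecidableEq α] {a : α → ℝ} (ha : ∀ s ∈ F, |a s| ≤ 1) {M : ℝ}
    (hM : 0 ≤ M) (w : ℝ) :
    ∑ A ∈ F.powerset, codeLength M (round (signedSum F a A / w))
      ≤ 2 ^ #F * (16 / M ^ 2 + 48 * M * #F ^ 2 / w ^ 4) := by
  have hfourth : ∑ A ∈ F.powerset, signedSum F a A ^ 4 ≤ 2 ^ #F * (3 * (#F : ℝ) ^ 2) := by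
    refine (sum_signedSum_pow_four_le F a).trans ?_
    gcongr
    exact sum_sq_le_card ha
  calc ∑ A ∈ F.powerset, codeLength M (round (signedSum F a A / w))
      ≤ ∑ A ∈ F.powerset, (16 / M ^ 2 + M * (16 * (signedSum F a A / w) ^ 4)) := by
        refine sum_le_sum fun A _ => (codeLength_le hM _).trans ?_
        gcongr
        exact round_pow_four_le _
    _ = 2 ^ #F * (16 / M ^ 2) + 16 * M / w ^ 4 * ∑ A ∈ F.powerset, signedSum F a A ^ 4 := by
        rw [sum_add_distrib, sum_const, card_powerset, mul_sum]
        congr 1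
        · simp
        · exact sum_congr rfl fun A _ => by ring
    _ ≤ 2 ^ #F * (16 / M ^ 2) + 16 * M / w ^ 4 * (2 ^ #F * (3 * (#F : ℝ) ^ 2)) := by gcongr
    _ = 2 ^ #F * (16 / M ^ 2 + 48 * M * #F ^ 2 / w ^ 4) := by ring

-- `M` solves `n * (16 / M ^ 2) = k / 8`, and the scale is what then makes the second term small.
lemma exists_codeLength_parameter {n k : ℕ} (hk : 0 < k) (hkn : k ≤ n) :
    ∃ M : ℝ, 4 ≤ M ∧
      n * (16 / M ^ 2 + 48 * M * k ^ 2 / (16 * spencerScale n k) ^ 4) ≤ (k : ℝ) / 4 := by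
  have hk' : (0 : ℝ) < k := by exact_mod_cast hk
  have hkn' : (k : ℝ) ≤ n := by exact_mod_cast hkn
  have hn' : (0 : ℝ) < n := hk'.trans_le hkn'
  set M := √(128 * n / k)
  set w := 16 * spencerScale n k with hw
  have hM : M ^ 2 = 128 * n / k := Real.sq_sqrt (by positivity)
  have hw₀ : 0 < w := mul_pos (by norm_num) (spencerScale_pos (hk.trans_le hkn) hk)
  have hw₄ : 384 * n * M * k ≤ w ^ 4 := by
    refine le_of_pow_le_pow_left₀ (n := 2) (by norm_num) (by positivity) ?_
    calc (384 * n * M * k) ^ 2 = 384 ^ 2 * (n : ℝ) ^ 2 * (k : ℝ) ^ 2 * M ^ 2 := by ring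
      _ = 384 ^ 2 * 128 * ((n : ℝ) ^ 3 * k) := by rw [hM]; field_simp
      _ ≤ 16 ^ 8 * ((n : ℝ) ^ 3 * k) := by gcongr; norm_num
      _ = (w ^ 4) ^ 2 := by rw [← spencerScale_pow_eight, hw]; ring
  have hzero : n * (16 / M ^ 2) = (k : ℝ) / 8 := by
    rw [hM]
    field_simp
    norm_num
  have htail : n * (48 * M * k ^ 2 / w ^ 4) ≤ (k : ℝ) / 8 := by
    rw [← mul_div_assoc, div_le_iff₀ (by positivity)]
    nlinarith
  refine ⟨M, Real.le_sqrt_of_sq_le ?_, by linarith⟩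
  rw [le_div_iff₀ hk']
  nlinarith

variable [Fintype ι] {a : α → ι → ℝ}

lemma exists_far_pair_signedSum_close [DecidableEq α] (hF : F.Nonempty)
    (hcard : #F ≤ Fintype.card ι)
    (ha : ∀ s ∈ F, ‖a s‖ ≤ 1) :
    ∃ A ⊆ F, ∃ B ⊆ F, #F < 16 * #(symmDiff A B) ∧
      ∀ i, |signedSum F (a · i) A - signedSum F (a · i) B|
        ≤ 16 * spencerScale (Fintype.card ι) #F := by
  classical
  set w := 16 * spencerScale (Fintype.card ι) #F
  have hw : 0 < w :=
    mul_pos (by norm_num) (spencerScale_pos (hF.card_pos.trans_le hcard) hF.card_pos)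
  obtain ⟨M, hM, hlength⟩ := exists_codeLength_parameter hF.card_pos hcard
  set β : Finset α → ι → ℤ := fun A i => round (signedSum F (a · i) A / w)
  have haverage : ∑ A ∈ F.powerset, ∑ i, codeLength M (β A i) ≤ #F.powerset * (#F / 4 : ℝ) := by
    calc ∑ A ∈ F.powerset, ∑ i, codeLength M (β A i)
        = ∑ i, ∑ A ∈ F.powerset, codeLength M (β A i) := sum_comm
      _ ≤ ∑ _i : ι, (2 ^ #F * (16 / M ^ 2 + 48 * M * #F ^ 2 / w ^ 4) : ℝ) :=
          sum_le_sum fun i _ => sum_codeLength_round_le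
            (fun s hs => (norm_le_pi_norm (a s) i).trans (ha s hs)) (by linarith) w
      _ = 2 ^ #F * (Fintype.card ι * (16 / M ^ 2 + 48 * M * #F ^ 2 / w ^ 4)) := by
          rw [sum_const, card_univ, nsmul_eq_mul]
          ring
      _ ≤ #F.powerset * (#F / 4 : ℝ) := by
          rw [card_powerset, Nat.cast_pow, Nat.cast_ofNat]
          gcongr
  have hkraft : ∑ f ∈ F.powerset.image β, Real.exp (-∑ i, codeLength M (f i)) ≤ 1 := by
    simp only [← sum_neg_distrib, Real.exp_sum]
    exact sum_prod_le_one (p := fun b => Real.exp (-codeLength M b)) (fun _ => (Real.exp_pos _).le)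
      (sum_exp_neg_codeLength_le_one hM) _
  obtain ⟨f, hf⟩ := exists_exp_neg_le_card_fiber ⟨∅, empty_mem_powerset F⟩ β
    (fun f => ∑ i, codeLength M (f i)) hkraft haverage
  rw [card_powerset, Nat.cast_pow, Nat.cast_ofNat] at hf
  obtain ⟨A, hA, B, hB, hfar⟩ := exists_card_lt_mul_card_symmDiff hF (filter_subset _ _) hf
  rw [mem_filter, mem_powerset] at hA hB
  exact ⟨A, hA.1, B, hB.1, hfar, fun i =>
    abs_sub_le_of_round_div_eq hw (congrFun (hA.2.trans hB.2.symm) i)⟩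

-- Half the difference of two signings that differ often but have close signed sums is a partial
-- coloring.
lemma exists_partial_coloring (hF : F.Nonempty) (hcard : #F ≤ Fintype.card ι)
    (ha : ∀ s ∈ F, ‖a s‖ ≤ 1) :
    ∃ p : α → ℤ, (∀ s, |p s| ≤ 1) ∧ 16 * #{s ∈ F | p s = 0} ≤ 15 * #F ∧
      ‖∑ s ∈ F, (p s : ℝ) • a s‖ ≤ 16 * spencerScale (Fintype.card ι) #F := by
  classical
  obtain ⟨A, hA, B, hB, hfar, hclose⟩ := exists_far_pair_signedSum_close hF hcard ha
  set p : α → ℤ := fun s => (if s ∈ A then 1 else 0) - (if s ∈ B then 1 else 0) with hp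
  have hzero : {s ∈ F | p s = 0} = F \ symmDiff A B := by
    ext s
    simp only [hp, mem_filter, mem_sdiff, mem_symmDiff]
    split_ifs <;> simp_all
  have hsum (i : ι) : ∑ s ∈ F, (p s : ℝ) * a s i = ∑ s ∈ A, a s i - ∑ s ∈ B, a s i := by
    simp only [hp, Int.cast_sub, Int.cast_ite, Int.cast_one, Int.cast_zero, sub_mul, ite_mul,
      one_mul, zero_mul, sum_sub_distrib, sum_ite_mem, inter_eq_right.2 hA, inter_eq_right.2 hB]
  refine ⟨p, fun s => ?_, ?_, ?_⟩
  · simp only [hp]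
    split_ifs <;> simp
  · have hsub : symmDiff A B ⊆ F := symmDiff_le_sup.trans (union_subset hA hB)
    have := card_le_card hsub
    rw [hzero, card_sdiff_of_subset hsub]
    omega
  · have hscale := spencerScale_nonneg (Fintype.card ι) #F
    refine (pi_norm_le_iff_of_nonneg (by positivity)).2 fun i => ?_
    have habs := hclose i
    rw [signedSum_sub_signedSum _ hA hB, ← hsum, abs_mul, abs_two] at habs
    simp only [Finset.sum_apply, Pi.smul_apply, smul_eq_mul, Real.norm_eq_abs]
    linarith

lemma exists_signing_norm_le_spencerScale (hcard : #F ≤ Fintype.card ι) (ha : ∀ s ∈ F, ‖a s‖ ≤ 1) :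
    ∃ χ : α → ℤ, (∀ s, |χ s| = 1) ∧
      ‖∑ s ∈ F, (χ s : ℝ) • a s‖ ≤ 2048 * spencerScale (Fintype.card ι) #F := by
  induction F using Finset.strongInduction with
  | H F ih =>
    rcases F.eq_empty_or_nonempty with rfl | hF
    · exact ⟨1, by simp, by simpa using spencerScale_nonneg _ 0⟩
    obtain ⟨p, hp, hzero, hdisc⟩ := exists_partial_coloring hF hcard ha
    set G := {s ∈ F | p s = 0}
    have hGF : G ⊆ F := filter_subset _ _
    have hG : G ⊂ F := hGF.ssubset_of_ne fun h => by
      have := hF.card_pos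
      rw [h] at hzero
      omega
    obtain ⟨χ, hχ, hrest⟩ := ih G hG ((card_le_card hGF).trans hcard) fun s hs => ha s (hGF hs)
    refine ⟨fun s => if p s = 0 then χ s else p s, fun s => ?_, ?_⟩
    · dsimp only
      split_ifs with hs
      · exact hχ s
      · exact le_antisymm (hp s) (Int.one_le_abs hs)
    have hsplit : ∑ s ∈ F, ((if p s = 0 then χ s else p s : ℤ) : ℝ) • a s
        = ∑ s ∈ F, (p s : ℝ) • a s + ∑ s ∈ G, (χ s : ℝ) • a s := by
      rw [sum_filter, ← sum_add_distrib]
      refine sum_congr rfl fun s _ => ?_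
      split_ifs with hs <;> simp [hs]
    rw [hsplit]
    linarith [norm_add_le (∑ s ∈ F, (p s : ℝ) • a s) (∑ s ∈ G, (χ s : ℝ) • a s),
      spencerScale_le_of_mul_le (n := Fintype.card ι) hzero]

theorem exists_signing_norm_le_sqrt (hcard : #F ≤ Fintype.card ι) (ha : ∀ s ∈ F, ‖a s‖ ≤ 1) :
    ∃ χ : α → ℤ, (∀ s, |χ s| = 1) ∧ ‖∑ s ∈ F, (χ s : ℝ) • a s‖ ≤ 2048 * √(Fintype.card ι) := by
  obtain ⟨χ, hχ, hdisc⟩ := exists_signing_norm_le_spencerScale hcard ha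
  exact ⟨χ, hχ, hdisc.trans (by gcongr; exact spencerScale_le_sqrt hcard)⟩

end Spencer

section LinearDiscrepancy

variable {V : Type*} [SeminormedAddCommGroup V] [NormedSpace ℝ V] {F : Finset α} {a : α → V} {K : ℝ}

lemma exists_two_mul_eq_add_ite_odd {m : ℕ} {j c : ℤ} (hj : |j| ≤ 2 ^ (m + 1)) (hc : |c| = 1) :
    ∃ i : ℤ, |i| ≤ 2 ^ m ∧ 2 * i = j + if Odd j then c else 0 := by
  rw [pow_succ, abs_le] at hj
  rcases Int.even_or_odd' j with ⟨i, rfl | rfl⟩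
  · exact ⟨i, abs_le.2 (by omega), by simp⟩
  · rw [if_pos (odd_two_mul_add_one i)]
    rcases eq_or_eq_neg_of_abs_eq hc with rfl | rfl
    · exact ⟨i + 1, abs_le.2 (by omega), by ring⟩
    · exact ⟨i, abs_le.2 (by omega), by ring⟩

-- The elements whose last binary digit is nonzero are balanced against each other by moving them up
-- or down by one unit of that digit, at cost `K / 2 ^ m`; the costs sum to a geometric series.
lemma exists_signing_near_dyadic
    (hK : ∀ G ⊆ F, ∃ χ : α → ℤ, (∀ s, |χ s| = 1) ∧ ‖∑ s ∈ G, (χ s : ℝ) • a s‖ ≤ K)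
    (m : ℕ) (j : α → ℤ) (hj : ∀ s, |j s| ≤ 2 ^ m) :
    ∃ χ : α → ℤ, (∀ s, |χ s| = 1) ∧
      ‖∑ s ∈ F, ((χ s : ℝ) - j s / 2 ^ m) • a s‖ ≤ K * (2 - (1 / 2) ^ m) := by
  induction m generalizing j with
  | zero =>
    obtain ⟨χ, hχ, hdisc⟩ := hK {s ∈ F | j s = 0} (filter_subset _ _)
    refine ⟨fun s => if j s = 0 then χ s else j s, fun s => ?_, ?_⟩
    · dsimp only
      split_ifs with hs
      · exact hχ s
      · exact le_antisymm (by simpa using hj s) (Int.one_le_abs hs)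
    · rw [sum_filter] at hdisc
      convert hdisc using 2
      · refine sum_congr rfl fun s _ => ?_
        split_ifs with hs <;> simp [hs]
      · norm_num
  | succ m ih =>
    obtain ⟨ε, hε, hdisc⟩ := hK {s ∈ F | Odd (j s)} (filter_subset _ _)
    choose i hi hij using fun s => exists_two_mul_eq_add_ite_odd (hj s) (hε s)
    obtain ⟨χ, hχ, hnear⟩ := ih i hi
    refine ⟨χ, hχ, ?_⟩
    have hcoeff (s : α) : (χ s : ℝ) - j s / 2 ^ (m + 1)
        = (χ s - i s / 2 ^ m) + (1 / 2) ^ (m + 1) * if Odd (j s) then (ε s : ℝ) else 0 := by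
      have hij' : (2 : ℝ) * i s = j s + if Odd (j s) then (ε s : ℝ) else 0 := by
        exact_mod_cast hij s
      rw [eq_sub_of_add_eq hij'.symm, div_pow, one_pow, pow_succ]
      field_simp
      ring
    have hsplit : ∑ s ∈ F, ((χ s : ℝ) - j s / 2 ^ (m + 1)) • a s
        = ∑ s ∈ F, ((χ s : ℝ) - i s / 2 ^ m) • a s
          + (1 / 2 : ℝ) ^ (m + 1) • ∑ s ∈ F with Odd (j s), (ε s : ℝ) • a s := by
      rw [sum_filter, smul_sum, ← sum_add_distrib]
      refine sum_congr rfl fun s _ => ?_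
      rw [hcoeff, add_smul, mul_smul, ite_smul, zero_smul]
    calc ‖∑ s ∈ F, ((χ s : ℝ) - j s / 2 ^ (m + 1)) • a s‖
        ≤ K * (2 - (1 / 2) ^ m) + (1 / 2) ^ (m + 1) * K := by
          rw [hsplit]
          refine (norm_add_le _ _).trans (add_le_add hnear ?_)
          rw [norm_smul, Real.norm_of_nonneg (by positivity)]
          gcongr
      _ = K * (2 - (1 / 2) ^ (m + 1)) := by ring

lemma abs_floor_mul_two_pow_le {x : ℝ} (hx : |x| ≤ 1) (m : ℕ) : |⌊x * 2 ^ m⌋| ≤ 2 ^ m := by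
  have hpow : (0 : ℝ) < 2 ^ m := by positivity
  obtain ⟨hlow, hhigh⟩ := abs_le.1 hx
  refine abs_le.2 ⟨Int.le_floor.2 ?_, Int.floor_le_iff.2 ?_⟩
  · push_cast
    nlinarith
  · push_cast
    nlinarith

lemma abs_floor_mul_two_pow_div_sub_le (x : ℝ) (m : ℕ) :
    |(⌊x * 2 ^ m⌋ : ℝ) / 2 ^ m - x| ≤ 1 / 2 ^ m := by
  have hpow : (0 : ℝ) < 2 ^ m := by positivity
  rw [div_sub' hpow.ne', abs_div, abs_of_pos hpow, mul_comm (2 ^ m) x]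
  gcongr
  rw [abs_sub_comm, abs_of_nonneg (sub_nonneg.2 (Int.floor_le _))]
  linarith [Int.lt_floor_add_one (x * 2 ^ m)]

-- The inequality `lindisc ≤ 2 herdisc` of Lovász, Spencer and Vesztergombi.
theorem exists_signing_near
    (hK : ∀ G ⊆ F, ∃ χ : α → ℤ, (∀ s, |χ s| = 1) ∧ ‖∑ s ∈ G, (χ s : ℝ) • a s‖ ≤ K)
    {x : α → ℝ} (hx : ∀ s, |x s| ≤ 1) {ε : ℝ} (hε : 0 < ε) :
    ∃ χ : α → ℤ, (∀ s, |χ s| = 1) ∧ ‖∑ s ∈ F, ((χ s : ℝ) - x s) • a s‖ ≤ 2 * K + ε := by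
  obtain ⟨m, hm⟩ := pow_unbounded_of_one_lt ((∑ s ∈ F, ‖a s‖) / ε) one_lt_two
  set j : α → ℤ := fun s => ⌊x s * 2 ^ m⌋
  obtain ⟨χ, hχ, hnear⟩ :=
    exists_signing_near_dyadic hK m j fun s => abs_floor_mul_two_pow_le (hx s) m
  have hK₀ : 0 ≤ K := by
    obtain ⟨_, -, h⟩ := hK ∅ (empty_subset F)
    exact (norm_nonneg _).trans h
  have hround : ‖∑ s ∈ F, ((j s : ℝ) / 2 ^ m - x s) • a s‖ ≤ ε := by
    calc ‖∑ s ∈ F, ((j s : ℝ) / 2 ^ m - x s) • a s‖ ≤ ∑ s ∈ F, 1 / 2 ^ m * ‖a s‖ := by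
          refine norm_sum_le_of_le F fun s _ => ?_
          rw [norm_smul]
          gcongr
          exact abs_floor_mul_two_pow_div_sub_le (x s) m
      _ = (∑ s ∈ F, ‖a s‖) / 2 ^ m := by rw [← mul_sum]; ring
      _ ≤ ε := by
          rw [div_le_iff₀ (by positivity), mul_comm]
          exact ((div_lt_iff₀ hε).1 hm).le
  refine ⟨χ, hχ, ?_⟩
  calc ‖∑ s ∈ F, ((χ s : ℝ) - x s) • a s‖
      = ‖∑ s ∈ F, ((χ s : ℝ) - j s / 2 ^ m) • a s + ∑ s ∈ F, ((j s : ℝ) / 2 ^ m - x s) • a s‖ := by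
        simp only [← sum_add_distrib, ← add_smul, sub_add_sub_cancel]
    _ ≤ K * (2 - (1 / 2) ^ m) + ε := (norm_add_le _ _).trans (add_le_add hnear hround)
    _ ≤ 2 * K + ε := by
        have : 0 ≤ K * (1 / 2) ^ m := by positivity
        linarith

end LinearDiscrepancy

section Rounding

variable {V : Type*} [AddCommGroup V] [Module ℝ V] {I : Finset α} {b b' : α → V}
  {x x' z z' : α → ℝ}

/-- The fractional coordinates in `I` of an assignment `x` with values in `[-1, 1]`: those not yet
frozen at `1` or `-1`. -/
noncomputable def fractional (I : Finset α) (x : α → ℝ) : Finset α := {s ∈ I | |x s| < 1}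

lemma mem_fractional {s : α} : s ∈ fractional I x ↔ s ∈ I ∧ |x s| < 1 := mem_filter

lemma abs_eq_one_of_notMem_fractional (hx : ∀ s, |x s| ≤ 1) {s : α} (hs : s ∈ I)
    (hfrac : s ∉ fractional I x) : |x s| = 1 :=
  (hx s).antisymm (not_lt.1 fun h => hfrac (mem_fractional.2 ⟨hs, h⟩))

/-- The conclusion of the Bárány–Grinberg rounding lemma: `z` is a point of the polytope of the
assignments in `[-1, 1]` that have the same weighted sum over `I` as `x` and that keep the frozen
coordinates of `x`, with as few fractional coordinates as a vertex of this polytope. -/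
structure IsRounding (I : Finset α) (b : α → V) (x z : α → ℝ) : Prop where
  abs_le : ∀ s, |z s| ≤ 1
  sum_smul_eq : ∑ s ∈ I, z s • b s = ∑ s ∈ I, x s • b s
  eq_of_notMem : ∀ s ∉ fractional I x, z s = x s
  card_fractional_le : #(fractional I z) ≤ Module.finrank ℝ V

lemma exists_abs_add_mul_eq_one {G : Finset α} {g : α → ℝ} (hx : ∀ s ∈ G, |x s| < 1)
    (hg : ∃ s ∈ G, g s ≠ 0) :
    ∃ τ : ℝ, (∀ s ∈ G, |x s + τ * g s| ≤ 1) ∧ ∃ s ∈ G, |x s + τ * g s| = 1 := by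
  obtain ⟨s₀, hs₀, hne⟩ := hg
  have hG : G.Nonempty := ⟨s₀, hs₀⟩
  set f : ℝ → ℝ := fun τ => G.sup' hG fun s => |x s + τ * g s|
  have hcont : Continuous f := Continuous.finset_sup'_apply hG fun s _ => by fun_prop
  have hinside : f 0 ≤ 1 := (sup'_le_iff hG _).2 fun s hs => by simpa using (hx s hs).le
  have houtside : 1 ≤ f (2 / g s₀) := by
    refine le_trans ?_ (le_sup' (fun s => |x s + 2 / g s₀ * g s|) hs₀)
    rw [div_mul_cancel₀ _ hne]
    linarith [le_abs_self (x s₀ + 2), neg_lt_of_abs_lt (hx s₀ hs₀)]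
  obtain ⟨τ, hτ⟩ := mem_range_of_exists_le_of_exists_ge hcont ⟨0, hinside⟩ ⟨_, houtside⟩
  obtain ⟨s, hs, hsup⟩ := exists_mem_eq_sup' hG fun s => |x s + τ * g s|
  exact ⟨τ, fun s hs => hτ ▸ le_sup' (fun s => |x s + τ * g s|) hs, s, hs, hsup.symm.trans hτ⟩

lemma exists_ne_zero_of_finrank_lt_card [FiniteDimensional ℝ V] {G : Finset α}
    (hG : Module.finrank ℝ V < #G) : ∃ g : α → ℝ, ∑ s ∈ G, g s • b s = 0 ∧ ∃ s ∈ G, g s ≠ 0 :=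
  not_linearIndepOn_finset_iff.1 fun hli =>
    hG.not_ge (by simpa using LinearIndependent.fintype_card_le_finrank hli)

lemma exists_fractional_ssubset [FiniteDimensional ℝ V] (b : α → V) (hx : ∀ s, |x s| ≤ 1)
    (hcard : Module.finrank ℝ V < #(fractional I x)) :
    ∃ z : α → ℝ, (∀ s, |z s| ≤ 1) ∧ ∑ s ∈ I, z s • b s = ∑ s ∈ I, x s • b s ∧
      (∀ s ∉ fractional I x, z s = x s) ∧ fractional I z ⊂ fractional I x := by
  classical
  obtain ⟨g, hker, hg⟩ := exists_ne_zero_of_finrank_lt_card (b := b) hcard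
  obtain ⟨τ, hle, s₀, hs₀, hfrozen⟩ :=
    exists_abs_add_mul_eq_one (fun s hs => (mem_fractional.1 hs).2) hg
  set z : α → ℝ := (fractional I x).piecewise (fun s => x s + τ * g s) x
  have hz_mem {s : α} (hs : s ∈ fractional I x) : z s = x s + τ * g s :=
    piecewise_eq_of_mem _ _ _ hs
  have hz_notMem {s : α} (hs : s ∉ fractional I x) : z s = x s := piecewise_eq_of_notMem _ _ _ hs
  have hsum : ∑ s ∈ I, (z s - x s) • b s = 0 := by
    calc ∑ s ∈ I, (z s - x s) • b s = ∑ s ∈ fractional I x, (z s - x s) • b s :=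
          (sum_subset (filter_subset _ _) fun s _ hs => by simp [hz_notMem hs]).symm
      _ = τ • ∑ s ∈ fractional I x, g s • b s := by
          rw [smul_sum]
          exact sum_congr rfl fun s hs => by rw [hz_mem hs, add_sub_cancel_left, mul_smul]
      _ = 0 := by rw [hker, smul_zero]
  refine ⟨z, fun s => ?_, ?_, fun s hs => hz_notMem hs, ?_⟩
  · by_cases hs : s ∈ fractional I x
    · exact hz_mem hs ▸ hle s hs
    · exact hz_notMem hs ▸ hx s
  · simpa only [sub_smul, sum_sub_distrib, sub_eq_zero] using hsum
  · refine ssubset_iff_of_subset (fun s hs => ?_) |>.2 ⟨s₀, hs₀, fun h => ?_⟩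
    · by_contra hs'
      rw [mem_fractional, hz_notMem hs'] at hs
      exact hs' (mem_fractional.2 hs)
    · exact (mem_fractional.1 h).2.ne (hz_mem hs₀ ▸ hfrozen)

theorem exists_isRounding [FiniteDimensional ℝ V] (I : Finset α) (b : α → V)
    (hx : ∀ s, |x s| ≤ 1) : ∃ z, IsRounding I b x z := by
  induction hk : #(fractional I x) using Nat.strong_induction_on generalizing x with
  | _ k ih =>
    by_cases hcard : #(fractional I x) ≤ Module.finrank ℝ V
    · exact ⟨x, hx, rfl, fun _ _ => rfl, hcard⟩
    obtain ⟨y, hy, hysum, hyx, hss⟩ := exists_fractional_ssubset b hx (not_le.1 hcard)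
    obtain ⟨z, hz⟩ := ih _ (hk ▸ card_lt_card hss) hy rfl
    exact ⟨z, hz.abs_le, hz.sum_smul_eq.trans hysum,
      fun s hs => (hz.eq_of_notMem s fun h => hs (hss.subset h)).trans (hyx s hs),
      hz.card_fractional_le⟩

lemma IsRounding.card_filter_ne_le (h : IsRounding I b x z) (h' : IsRounding I b' x' z') :
    #{s ∈ I | z s ≠ z' s}
      ≤ #(fractional I x) + #(fractional I x') + #{s ∈ I | x s ≠ x' s} := by
  classical
  have hsub : {s ∈ I | z s ≠ z' s}
      ⊆ fractional I x ∪ fractional I x' ∪ {s ∈ I | x s ≠ x' s} := by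
    intro s hs
    rw [mem_filter] at hs
    by_contra hs'
    simp only [mem_union, mem_filter, not_or, not_and, not_not] at hs'
    obtain ⟨⟨hx, hx'⟩, heq⟩ := hs'
    exact hs.2 (by rw [h.eq_of_notMem s hx, h'.eq_of_notMem s hx', heq hs.1])
  exact (card_le_card hsub).trans ((card_union_le _ _).trans (by gcongr; exact card_union_le _ _))

/-- The Bárány–Grinberg rounding of `x`. The choice depends on `b` only through the predicate
`IsRounding I b x`, hence only through the restriction of `b` to `I`. -/
noncomputable def bgRound (I : Finset α) (b : α → V) (x : α → ℝ) : α → ℝ :=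
  Classical.epsilon (IsRounding I b x)

lemma isRounding_bgRound [FiniteDimensional ℝ V] (I : Finset α) (b : α → V)
    (hx : ∀ s, |x s| ≤ 1) : IsRounding I b x (bgRound I b x) :=
  Classical.epsilon_spec (exists_isRounding I b hx)

lemma bgRound_congr (h : ∀ s ∈ I, b s = b' s) : bgRound I b x = bgRound I b' x := by
  have hsum (z : α → ℝ) : ∑ s ∈ I, z s • b s = ∑ s ∈ I, z s • b' s :=
    sum_congr rfl fun s hs => by rw [h s hs]
  have hpred : IsRounding I b x = IsRounding I b' x := by
    funext z
    refine propext ⟨fun hz => ⟨hz.1, ?_, hz.3, hz.4⟩, fun hz => ⟨hz.1, ?_, hz.3, hz.4⟩⟩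
    · simpa only [hsum] using hz.sum_smul_eq
    · simpa only [hsum] using hz.sum_smul_eq
  rw [bgRound, bgRound, hpred]

end Rounding

section Tree

variable {d a s : ℕ} {l r l' r' : ℕ → ℝ}

/-- The index set of a node of the balanced binary tree, namely the dyadic block of length `2 ^ d`
starting at `a`. -/
def treeNode (d a : ℕ) : Finset ℕ := Ico a (a + 2 ^ d)

lemma treeNode_zero (a : ℕ) : treeNode 0 a = {a} := by simp [treeNode]

lemma treeNode_succ (d a : ℕ) : treeNode (d + 1) a = treeNode d a ∪ treeNode d (a + 2 ^ d) := by
  rw [treeNode, pow_succ, mul_two, ← add_assoc]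
  exact (Ico_union_Ico_eq_Ico (Nat.le_add_right _ _) (Nat.le_add_right _ _)).symm

lemma disjoint_treeNode (d a : ℕ) : Disjoint (treeNode d a) (treeNode d (a + 2 ^ d)) :=
  Ico_disjoint_Ico_consecutive a _ _

/-- The assignment on the node `treeNode (d + 1) a` made of the assignments `l` and `r` on its two
children. -/
def treeJoin (d a : ℕ) (l r : ℕ → ℝ) : ℕ → ℝ := (treeNode d a).piecewise l r

lemma treeJoin_of_mem_left (hs : s ∈ treeNode d a) : treeJoin d a l r s = l s :=
  piecewise_eq_of_mem _ _ _ hs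

lemma treeJoin_of_mem_right (hs : s ∈ treeNode d (a + 2 ^ d)) : treeJoin d a l r s = r s :=
  piecewise_eq_of_notMem _ _ _ (disjoint_right.1 (disjoint_treeNode d a) hs)

lemma abs_treeJoin_le (hl : ∀ s, |l s| ≤ 1) (hr : ∀ s, |r s| ≤ 1) (s : ℕ) :
    |treeJoin d a l r s| ≤ 1 :=
  piecewise_cases (treeNode d a) l r (fun y => |y| ≤ 1) (hl s) (hr s)

lemma card_filter_treeNode_succ_le (p : ℕ → Prop) [DecidablePred p] :
    #{s ∈ treeNode (d + 1) a | p s}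
      ≤ #{s ∈ treeNode d a | p s} + #{s ∈ treeNode d (a + 2 ^ d) | p s} := by
  rw [treeNode_succ, filter_union]
  exact card_union_le _ _

lemma card_fractional_treeJoin_le :
    #(fractional (treeNode (d + 1) a) (treeJoin d a l r))
      ≤ #(fractional (treeNode d a) l) + #(fractional (treeNode d (a + 2 ^ d)) r) := by
  refine (card_filter_treeNode_succ_le _).trans_eq (congrArg₂ _ ?_ ?_) <;>
    refine congrArg _ (filter_congr fun s hs => ?_)
  · rw [treeJoin_of_mem_left hs]
  · rw [treeJoin_of_mem_right hs]

lemma card_treeJoin_ne_le :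
    #{s ∈ treeNode (d + 1) a | treeJoin d a l r s ≠ treeJoin d a l' r' s}
      ≤ #{s ∈ treeNode d a | l s ≠ l' s} + #{s ∈ treeNode d (a + 2 ^ d) | r s ≠ r' s} := by
  refine (card_filter_treeNode_succ_le _).trans_eq (congrArg₂ _ ?_ ?_) <;>
    refine congrArg _ (filter_congr fun s hs => ?_)
  · rw [treeJoin_of_mem_left hs, treeJoin_of_mem_left hs]
  · rw [treeJoin_of_mem_right hs, treeJoin_of_mem_right hs]

variable {V : Type*} [AddCommGroup V] [Module ℝ V] {b b' : ℕ → V}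

lemma sum_treeJoin_smul (l r : ℕ → ℝ) (b : ℕ → V) :
    ∑ s ∈ treeNode (d + 1) a, treeJoin d a l r s • b s
      = ∑ s ∈ treeNode d a, l s • b s + ∑ s ∈ treeNode d (a + 2 ^ d), r s • b s := by
  rw [treeNode_succ, sum_union (disjoint_treeNode d a)]
  congr 1
  · exact sum_congr rfl fun s hs => by rw [treeJoin_of_mem_left hs]
  · exact sum_congr rfl fun s hs => by rw [treeJoin_of_mem_right hs]

/-- The assignment that the Bárány–Grinberg tree maintains at the node `treeNode d a`. The leaves
are single indices rather than blocks of `2 n` of them, which only lengthens the paths by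
`O(log n)`. -/
noncomputable def bgTree (b : ℕ → V) : ℕ → ℕ → ℕ → ℝ
  | 0, a => bgRound (treeNode 0 a) b 0
  | d + 1, a =>
    bgRound (treeNode (d + 1) a) b (treeJoin d a (bgTree b d a) (bgTree b d (a + 2 ^ d)))

-- Hence only the nodes on one root-to-leaf path change when one vector changes.
lemma bgTree_congr (h : ∀ s ∈ treeNode d a, b s = b' s) : bgTree b d a = bgTree b' d a := by
  induction d generalizing a with
  | zero => exact bgRound_congr h
  | succ d ih =>
    have hl : bgTree b d a = bgTree b' d a := ih fun s hs =>
      h s (treeNode_succ d a ▸ mem_union_left _ hs)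
    have hr : bgTree b d (a + 2 ^ d) = bgTree b' d (a + 2 ^ d) := ih fun s hs =>
      h s (treeNode_succ d a ▸ mem_union_right _ hs)
    rw [bgTree, bgTree, hl, hr, bgRound_congr h]

variable [FiniteDimensional ℝ V]

lemma isRounding_bgTree_zero (b : ℕ → V) (a : ℕ) :
    IsRounding (treeNode 0 a) b 0 (bgTree b 0 a) :=
  isRounding_bgRound _ b (by simp)

lemma abs_bgTree_le (b : ℕ → V) (d a s : ℕ) : |bgTree b d a s| ≤ 1 := by
  induction d generalizing a s with
  | zero => exact (isRounding_bgTree_zero b a).abs_le s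
  | succ d ih => exact (isRounding_bgRound _ b (abs_treeJoin_le (ih a) (ih _))).abs_le s

lemma isRounding_bgTree_succ (b : ℕ → V) (d a : ℕ) :
    IsRounding (treeNode (d + 1) a) b (treeJoin d a (bgTree b d a) (bgTree b d (a + 2 ^ d)))
      (bgTree b (d + 1) a) :=
  isRounding_bgRound _ b (abs_treeJoin_le (abs_bgTree_le b d a) (abs_bgTree_le b d _))

lemma card_fractional_bgTree_le (b : ℕ → V) (d a : ℕ) :
    #(fractional (treeNode d a) (bgTree b d a)) ≤ Module.finrank ℝ V := by
  cases d with
  | zero => exact (isRounding_bgTree_zero b a).card_fractional_le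
  | succ d => exact (isRounding_bgTree_succ b d a).card_fractional_le

theorem sum_bgTree_smul (b : ℕ → V) (d a : ℕ) : ∑ s ∈ treeNode d a, bgTree b d a s • b s = 0 := by
  induction d generalizing a with
  | zero => simpa using (isRounding_bgTree_zero b a).sum_smul_eq
  | succ d ih =>
    rw [(isRounding_bgTree_succ b d a).sum_smul_eq, sum_treeJoin_smul, ih, ih, add_zero]

lemma card_fractional_treeJoin_bgTree_le (b : ℕ → V) (d a : ℕ) :
    #(fractional (treeNode (d + 1) a) (treeJoin d a (bgTree b d a) (bgTree b d (a + 2 ^ d))))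
      ≤ 2 * Module.finrank ℝ V := by
  rw [two_mul]
  exact card_fractional_treeJoin_le.trans
    (add_le_add (card_fractional_bgTree_le b d a) (card_fractional_bgTree_le b d _))

lemma card_bgTree_zero_ne_le (b b' : ℕ → V) (a : ℕ) :
    #{s ∈ treeNode 0 a | bgTree b 0 a s ≠ bgTree b' 0 a s} ≤ Module.finrank ℝ V := by
  by_cases h : b a = b' a
  · rw [bgTree_congr (b' := b') (by simpa [treeNode_zero] using h)]
    simp
  · have : Nontrivial V := ⟨b a, b' a, h⟩
    calc #{s ∈ treeNode 0 a | bgTree b 0 a s ≠ bgTree b' 0 a s} ≤ #(treeNode 0 a) :=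
          card_filter_le _ _
      _ = 1 := by rw [treeNode_zero, card_singleton]
      _ ≤ Module.finrank ℝ V := Module.finrank_pos

theorem card_bgTree_ne_le {i : ℕ} (h : ∀ s ≠ i, b s = b' s) (d a : ℕ) :
    #{s ∈ treeNode d a | bgTree b d a s ≠ bgTree b' d a s}
      ≤ Module.finrank ℝ V * (4 * d + 1) := by
  induction d generalizing a with
  | zero => simpa using card_bgTree_zero_ne_le b b' a
  | succ d ih =>
    have hchildren : #{s ∈ treeNode (d + 1) a |
        treeJoin d a (bgTree b d a) (bgTree b d (a + 2 ^ d)) s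
          ≠ treeJoin d a (bgTree b' d a) (bgTree b' d (a + 2 ^ d)) s}
        ≤ Module.finrank ℝ V * (4 * d + 1) := by
      refine card_treeJoin_ne_le.trans ?_
      by_cases hi : i ∈ treeNode d a
      · have hi' := disjoint_left.1 (disjoint_treeNode d a) hi
        rw [bgTree_congr (a := a + 2 ^ d) fun s hs => h s (ne_of_mem_of_not_mem hs hi')]
        simpa using ih a
      · rw [bgTree_congr (a := a) fun s hs => h s (ne_of_mem_of_not_mem hs hi)]
        simpa using ih (a + 2 ^ d)
    have hnode :=
      (isRounding_bgTree_succ b d a).card_filter_ne_le (isRounding_bgTree_succ b' d a)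
    have hfrac := card_fractional_treeJoin_bgTree_le b d a
    have hfrac' := card_fractional_treeJoin_bgTree_le b' d a
    linarith

end Tree

section Signing

variable [Fintype ι] {I : Finset α} {b b' : α → ι → ℝ} {y y' : α → ℝ} {σ σ' : α → ℤ}

lemma exists_signing_near_sqrt {F : Finset α} (hcard : #F ≤ Fintype.card ι)
    (hb : ∀ s ∈ F, ‖b s‖ ≤ 1) (hy : ∀ s, |y s| ≤ 1) :
    ∃ χ : α → ℤ, (∀ s, |χ s| = 1) ∧
      ‖∑ s ∈ F, ((χ s : ℝ) - y s) • b s‖ ≤ 4097 * √(Fintype.card ι) := by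
  rcases F.eq_empty_or_nonempty with rfl | hF
  · exact ⟨1, by simp, by simp⟩
  have hpos : 0 < √(Fintype.card ι : ℝ) :=
    Real.sqrt_pos.2 (by exact_mod_cast hF.card_pos.trans_le hcard)
  obtain ⟨χ, hχ, hnear⟩ := exists_signing_near (fun G hG => exists_signing_norm_le_sqrt
    ((card_le_card hG).trans hcard) fun s hs => hb s (hG hs)) hy hpos
  exact ⟨χ, hχ, by linarith⟩

/-- `σ` is a rounding of the assignment `y` to signs that keeps the frozen coordinates and changes
the weighted sum over `I` by `O(√n)`. -/
structure IsSigning (I : Finset α) (b : α → ι → ℝ) (y : α → ℝ) (σ : α → ℤ) : Prop where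
  abs_eq_one : ∀ s, |σ s| = 1
  eq_of_abs_eq_one : ∀ s, |y s| = 1 → (σ s : ℝ) = y s
  norm_sum_sub_le : ‖∑ s ∈ I, ((σ s : ℝ) - y s) • b s‖ ≤ 4097 * √(Fintype.card ι)

theorem exists_isSigning (hy : ∀ s, |y s| ≤ 1) (hcard : #(fractional I y) ≤ Fintype.card ι)
    (hb : ∀ s ∈ I, ‖b s‖ ≤ 1) : ∃ σ, IsSigning I b y σ := by
  obtain ⟨χ, hχ, hnear⟩ :=
    exists_signing_near_sqrt hcard (fun s hs => hb s (mem_fractional.1 hs).1) hy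
  have hfrozen {s : α} (hs : ¬|y s| < 1) : (⌊y s⌋ : ℝ) = y s := by
    rcases eq_or_eq_neg_of_abs_eq ((hy s).antisymm (not_lt.1 hs)) with h | h <;> norm_num [h]
  refine ⟨fun s => if |y s| < 1 then χ s else ⌊y s⌋, fun s => ?_, fun s hs => ?_, ?_⟩
  · split_ifs with hs
    · exact hχ s
    · have hone : |(⌊y s⌋ : ℝ)| = 1 := by rw [hfrozen hs, (hy s).antisymm (not_lt.1 hs)]
      exact_mod_cast hone
  · rw [if_neg hs.not_lt, hfrozen hs.not_lt]
  · rw [fractional, sum_filter] at hnear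
    convert hnear using 3 with s
    split_ifs with hs
    · rfl
    · rw [hfrozen hs, sub_self, zero_smul]

lemma IsSigning.norm_sum_smul_le (h : IsSigning I b y σ) (hsum : ∑ s ∈ I, y s • b s = 0) :
    ‖∑ s ∈ I, (σ s : ℝ) • b s‖ ≤ 4097 * √(Fintype.card ι) := by
  simpa only [sub_smul, sum_sub_distrib, hsum, sub_zero] using h.norm_sum_sub_le

lemma IsSigning.card_filter_ne_le (h : IsSigning I b y σ) (h' : IsSigning I b' y' σ')
    (hy : ∀ s, |y s| ≤ 1) :
    #{s ∈ I | σ s ≠ σ' s} ≤ #(fractional I y) + #{s ∈ I | y s ≠ y' s} := by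
  classical
  have hsub : {s ∈ I | σ s ≠ σ' s} ⊆ fractional I y ∪ {s ∈ I | y s ≠ y' s} := by
    intro s hs
    rw [mem_filter] at hs
    by_contra hs'
    simp only [mem_union, mem_filter, not_or, not_and, not_not] at hs'
    have hone : |y s| = 1 := abs_eq_one_of_notMem_fractional hy hs.1 hs'.1
    have heq : y s = y' s := hs'.2 hs.1
    refine hs.2 (Int.cast_injective (α := ℝ) ?_)
    rw [h.eq_of_abs_eq_one s hone, h'.eq_of_abs_eq_one s (heq ▸ hone), heq]
  exact (card_le_card hsub).trans (card_union_le _ _)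

/-- The signing maintained on top of the assignment `y` of the tree. -/
noncomputable def roundSign (I : Finset α) (b : α → ι → ℝ) (y : α → ℝ) : α → ℤ :=
  Classical.epsilon (IsSigning I b y)

lemma isSigning_roundSign (hy : ∀ s, |y s| ≤ 1) (hcard : #(fractional I y) ≤ Fintype.card ι)
    (hb : ∀ s ∈ I, ‖b s‖ ≤ 1) : IsSigning I b y (roundSign I b y) :=
  Classical.epsilon_spec (exists_isSigning hy hcard hb)

end Signing

section Dynamic

variable {n d s t : ℕ} {u u' : ℕ → Update n}

lemma lt_of_mem_active (hs : s ∈ active u t) : s < t := by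
  induction t with
  | zero => simp [active] at hs
  | succ t ih =>
    rw [active] at hs
    split at hs
    · rcases mem_insert.1 hs with rfl | hs
      · exact Nat.lt_succ_self s
      · exact (ih hs).trans (Nat.lt_succ_self t)
    · exact (ih (mem_of_mem_erase hs)).trans (Nat.lt_succ_self t)

lemma active_subset_treeNode (ht : t ≤ 2 ^ d) : active u t ⊆ treeNode d 0 := fun s hs =>
  mem_Ico.2 ⟨s.zero_le, by have := lt_of_mem_active hs; omega⟩

lemma active_congr (h : ∀ s < t, u s = u' s) : active u t = active u' t := by
  induction t with
  | zero => rfl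
  | succ t ih =>
    rw [active, active, h t (Nat.lt_succ_self t), ih fun s hs => h s (hs.trans t.lt_succ_self)]

lemma exists_forall_ne_mem_active_succ_iff (u : ℕ → Update n) (t : ℕ) :
    ∃ i, ∀ s ≠ i, (s ∈ active u (t + 1) ↔ s ∈ active u t) := by
  rcases hu : u t with v | i
  · exact ⟨t, fun s hs => by simp [active, hu, hs]⟩
  · exact ⟨i, fun s hs => by simp [active, hu, hs]⟩

/-- The vectors fed to the tree after `t` updates. A slot that is not active carries the zero
vector, so that every update changes one vector of a fixed family. -/
def activeVec (u : ℕ → Update n) (t s : ℕ) : Fin n → ℝ := if s ∈ active u t then vecAt u s else 0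

lemma activeVec_congr (h : ∀ s < t, u s = u' s) : activeVec u t = activeVec u' t := by
  funext s
  rw [activeVec, activeVec, ← active_congr h]
  split_ifs with hs
  · rw [vecAt, vecAt, h s (lt_of_mem_active hs)]
  · rfl

lemma exists_forall_ne_activeVec_succ_eq (u : ℕ → Update n) (t : ℕ) :
    ∃ i, ∀ s ≠ i, activeVec u (t + 1) s = activeVec u t s := by
  obtain ⟨i, hi⟩ := exists_forall_ne_mem_active_succ_iff u t
  exact ⟨i, fun s hs => by simp only [activeVec, hi s hs]⟩

lemma norm_activeVec_le (hu : ∀ t v, u t = Sum.inl v → ∀ c, |v c| ≤ 1) (t s : ℕ) :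
    ‖activeVec u t s‖ ≤ 1 := by
  refine (pi_norm_le_iff_of_nonneg zero_le_one).2 fun c => ?_
  rw [activeVec]
  split_ifs
  · rcases h : u s with v | i
    · simpa [vecAt, h] using hu s v h c
    · simp [vecAt, h]
  · simp

lemma sum_treeNode_smul_activeVec (ht : t ≤ 2 ^ d) (y : ℕ → ℝ) :
    ∑ s ∈ treeNode d 0, y s • activeVec u t s = ∑ s ∈ active u t, y s • vecAt u s := by
  simp only [activeVec, smul_ite, smul_zero, sum_ite_mem,
    inter_eq_right.2 (active_subset_treeNode ht)]

/-- The assignment at the root of a tree of depth `d` after `t` updates. -/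
noncomputable def treeAssignment (u : ℕ → Update n) (d t : ℕ) : ℕ → ℝ := bgTree (activeVec u t) d 0

lemma abs_treeAssignment_le (u : ℕ → Update n) (d t s : ℕ) : |treeAssignment u d t s| ≤ 1 :=
  abs_bgTree_le _ d 0 s

lemma sum_treeAssignment_smul (ht : t ≤ 2 ^ d) :
    ∑ s ∈ active u t, treeAssignment u d t s • vecAt u s = 0 := by
  rw [← sum_treeNode_smul_activeVec ht]
  exact sum_bgTree_smul _ d 0

lemma card_fractional_treeAssignment_le (u : ℕ → Update n) (d t : ℕ) :
    #(fractional (treeNode d 0) (treeAssignment u d t)) ≤ n :=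
  (card_fractional_bgTree_le (activeVec u t) d 0).trans_eq (Module.finrank_fin_fun ℝ)

lemma card_treeAssignment_succ_ne_le (u : ℕ → Update n) (d t : ℕ) :
    #{s ∈ treeNode d 0 | treeAssignment u d (t + 1) s ≠ treeAssignment u d t s}
      ≤ n * (4 * d + 1) := by
  obtain ⟨i, hi⟩ := exists_forall_ne_activeVec_succ_eq u t
  exact (card_bgTree_ne_le hi d 0).trans_eq (by rw [Module.finrank_fin_fun])

theorem ncard_fractional_treeAssignment_le (ht : t ≤ 2 ^ d) :
    {s | s ∈ active u t ∧ -1 < treeAssignment u d t s ∧ treeAssignment u d t s < 1}.ncard ≤ n := by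
  refine le_trans ?_ (card_fractional_treeAssignment_le u d t)
  rw [← Set.ncard_coe_finset]
  exact Set.ncard_le_ncard fun s hs =>
    mem_fractional.2 ⟨active_subset_treeNode ht hs.1, abs_lt.2 hs.2⟩

theorem ncard_treeAssignment_succ_ne_le (ht : t < 2 ^ d) :
    {s | s ∈ active u t ∪ active u (t + 1) ∧
      treeAssignment u d (t + 1) s ≠ treeAssignment u d t s}.ncard ≤ n * (4 * d + 1) := by
  refine le_trans ?_ (card_treeAssignment_succ_ne_le u d t)
  rw [← Set.ncard_coe_finset]
  exact Set.ncard_le_ncard fun s hs => mem_filter.2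
    ⟨union_subset (active_subset_treeNode ht.le) (active_subset_treeNode ht) hs.1, hs.2⟩

/-- The signing maintained after `t` updates. -/
noncomputable def treeSigning (u : ℕ → Update n) (d t : ℕ) : ℕ → ℤ :=
  roundSign (treeNode d 0) (activeVec u t) (treeAssignment u d t)

lemma isSigning_treeSigning (hu : ∀ t v, u t = Sum.inl v → ∀ c, |v c| ≤ 1) (d t : ℕ) :
    IsSigning (treeNode d 0) (activeVec u t) (treeAssignment u d t) (treeSigning u d t) :=
  isSigning_roundSign (abs_treeAssignment_le u d t)
    (by simpa using card_fractional_treeAssignment_le u d t) fun s _ => norm_activeVec_le hu t s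

theorem norm_sum_treeSigning_smul_le (hu : ∀ t v, u t = Sum.inl v → ∀ c, |v c| ≤ 1)
    (ht : t ≤ 2 ^ d) : ‖∑ s ∈ active u t, (treeSigning u d t s : ℝ) • vecAt u s‖ ≤ 4097 * √n := by
  rw [← sum_treeNode_smul_activeVec ht]
  simpa using (isSigning_treeSigning hu d t).norm_sum_smul_le (sum_bgTree_smul _ d 0)

theorem card_treeSigning_succ_ne_le (hu : ∀ t v, u t = Sum.inl v → ∀ c, |v c| ≤ 1)
    (ht : t < 2 ^ d) :
    #{s ∈ active u (t + 1) ∩ active u t | treeSigning u d (t + 1) s ≠ treeSigning u d t s}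
      ≤ n * (4 * d + 2) := by
  have hactive : active u (t + 1) ∩ active u t ⊆ treeNode d 0 :=
    inter_subset_left.trans (active_subset_treeNode ht)
  have hsign := (isSigning_treeSigning hu d (t + 1)).card_filter_ne_le
    (isSigning_treeSigning hu d t) (abs_treeAssignment_le u d (t + 1))
  have hfrac := card_fractional_treeAssignment_le u d (t + 1)
  have hassign := card_treeAssignment_succ_ne_le u d t
  refine (card_le_card (filter_subset_filter _ hactive)).trans ?_
  linarith

/-- The online algorithm, which recomputes the signing from the history of updates. Times outside
the history get a dummy deletion, which is never read. -/
noncomputable def treeAlg (n d : ℕ) (history : List (Update n)) : ℕ → ℤ :=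
  treeSigning (fun i => history.getD i (Sum.inr 0)) d history.length

lemma sigOf_treeAlg (u : ℕ → Update n) (d t : ℕ) :
    sigOf (treeAlg n d) u t = treeSigning u d t := by
  have h : ∀ s < t, ((List.range t).map u).getD s (Sum.inr 0) = u s := fun s hs => by
    simp [List.getD, hs]
  simp only [sigOf, treeAlg, treeSigning, treeAssignment, List.length_map, List.length_range,
    activeVec_congr h]

end Dynamic

end VectorBalancing

open VectorBalancing

/-- **Fully-dynamic vector balancing (Theorem 1 / distributed Bárány–Grinberg).**
There is a deterministic online algorithm which, for any adaptively chosen sequence of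
`T` insertions/deletions of vectors in `[-1,1]^n`, maintains a `±1` signing of the
active vectors of discrepancy `O(√n)` with total recourse `O(n log T)` per update in an
amortized sense; moreover it maintains a fractional assignment `y ∈ [-1,1]` over the
active vectors with `∑ y_s a_s = 0`, at most `n` fractional coordinates, and at most
`O(n log T)` coordinate changes per update. -/
theorem stmt19 :
    ∃ C : ℝ, 0 < C ∧
      ∀ (n T : ℕ),
        ∃ Alg : List (Update n) → ℕ → ℤ,
          ∀ u : ℕ → Update n,
            (∀ (t : ℕ) (v : Fin n → ℝ), u t = Sum.inl v → ∀ c, |v c| ≤ 1) →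
            (∀ (t s : ℕ), u t = Sum.inr s → s ∈ active u t) →
            (∀ t : ℕ, ∀ s ∈ active u t, sigOf Alg u t s = 1 ∨ sigOf Alg u t s = -1) ∧
            (∀ t ≤ T, ∀ c : Fin n,
              |∑ s ∈ active u t, (sigOf Alg u t s : ℝ) * vecAt u s c|
                ≤ C * Real.sqrt n) ∧
            ((∑ t ∈ Finset.range T,
                ((active u (t + 1) ∩ active u t).filter
                  (fun s => sigOf Alg u (t + 1) s ≠ sigOf Alg u t s)).card : ℝ)
              ≤ C * n * ((Nat.log 2 T : ℝ) + 1) * T) ∧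
            (∃ y : ℕ → ℕ → ℝ,
              (∀ t s : ℕ, |y t s| ≤ 1) ∧
              (∀ t ≤ T, ∀ c : Fin n, ∑ s ∈ active u t, y t s * vecAt u s c = 0) ∧
              (∀ t ≤ T,
                ({s : ℕ | s ∈ active u t ∧ -1 < y t s ∧ y t s < 1}).ncard ≤ n) ∧
              (∀ t < T,
                (({s : ℕ | s ∈ active u t ∪ active u (t + 1) ∧
                    y (t + 1) s ≠ y t s}).ncard : ℝ)
                  ≤ C * n * ((Nat.log 2 T : ℝ) + 1))) := by
  refine ⟨4097, by norm_num, fun n T => ?_⟩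
  set d := Nat.log 2 T + 1 with hd
  refine ⟨treeAlg n d, fun u hu _ => ?_⟩
  have hT : T ≤ 2 ^ d := (Nat.lt_pow_succ_log_self one_lt_two T).le
  have recourse {k : ℕ} (hk : k ≤ n * (4 * d + 2)) :
      (k : ℝ) ≤ 4097 * n * ((Nat.log 2 T : ℝ) + 1) := by
    exact_mod_cast hk.trans (by nlinarith)
  simp only [sigOf_treeAlg]
  refine ⟨fun t s _ => eq_or_eq_neg_of_abs_eq ((isSigning_treeSigning hu d t).abs_eq_one s),
    fun t ht c => ?_, ?_, treeAssignment u d, abs_treeAssignment_le u d, fun t ht c => ?_,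
    fun t ht => ncard_fractional_treeAssignment_le (ht.trans hT), fun t ht => recourse ?_⟩
  · simpa [Finset.sum_apply] using
      (norm_le_pi_norm _ c).trans (norm_sum_treeSigning_smul_le hu (ht.trans hT))
  · rw [mul_comm _ (T : ℝ), ← nsmul_eq_mul]
    refine (sum_le_card_nsmul _ _ _ fun t ht => recourse ?_).trans_eq (by rw [card_range])
    exact card_treeSigning_succ_ne_le hu ((mem_range.1 ht).trans_le hT)
  · simpa [Finset.sum_apply] using congrFun (sum_treeAssignment_smul (ht.trans hT)) c
  · exact (ncard_treeAssignment_succ_ne_le (ht.trans_le hT)).trans (by gcongr; norm_num)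
end
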